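/- arXiv:1803.07270 — 2 statements merged into one kernel-verified Lean document; each statement's English description precedes it below -/
import Mathlib

section
/- (One step of the transformed Riccati recursion preserves positive semidefiniteness) Fix i ∈ {1,…,L}. Let X_1,…,X_L ∈ ℝ^{n×n} be symmetric positive semidefinite, and set W = Σ_{j=1}^L ρ_{i,j} X_j. Let Q̃_i ∈ ℝ^{n×n} symmetric, L̃_i ∈ ℝ^{m×n}, R̃_i ∈ ℝ^{m×m} symmetric be such that the block matrix [[Q̃_i, L̃_iᵀ],[L̃_i, R̃_i]] is positive semidefinite. Define Υ̃_i = C_iᵀ W C_i + σ² D_iᵀ W D_i + R̃_i and M̃_i = C_iᵀ W A_i + σ² D_iᵀ W B_i + L̃_i, let Υ̃_i† be the Moore–Penrose pseudoinverse of Υ̃_i, and assume Υ̃_i Υ̃_i† M̃_i = M̃_i. Then A_iᵀ W A_i + σ² B_iᵀ W B_i + Q̃_i − M̃_iᵀ Υ̃_i† M̃_i is positive semidefinite. -/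
open Matrix

/-!
Put `S = Aᴴ * W * A + σ² • (Bᴴ * W * B) + Q`. The block matrix `[[S, Mᴴ], [M, Υ]]` is
`[A C]ᴴ * W * [A C] + σ² • ([B D]ᴴ * W * [B D]) + [[Q, Lᴴ], [L, R]]`, hence positive semidefinite.
The Riccati step is the generalised Schur complement of `Υ` in it: if `Υ * G * M = M`, conjugating
by the block column `[1; -(G * M)]` leaves exactly `S - Mᴴ * G * M`.
-/

section Ring

variable {m n p R : Type*} [Ring R] [PartialOrder R] [StarRing R]

theorem posSemidef_iff_transpose_eq_and_dotProduct_mulVec_nonneg [Fintype n] [TrivialStar R]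
    {S : Matrix n n R} : S.PosSemidef ↔ Sᵀ = S ∧ ∀ x, 0 ≤ x ⬝ᵥ (S *ᵥ x) := by
  simp only [posSemidef_iff_dotProduct_mulVec, IsHermitian, conjTranspose_eq_transpose_of_trivial,
    star_trivial]

theorem posSemidef_fromBlocks_conjTranspose_mul_mul [Finite m] [Finite n] [Fintype p]
    {W : Matrix p p R} (hW : W.PosSemidef) (A : Matrix p n R) (C : Matrix p m R) :
    (fromBlocks (Aᴴ * W * A) (Aᴴ * W * C) (Cᴴ * W * A) (Cᴴ * W * C)).PosSemidef := by
  simpa only [conjTranspose_fromCols_eq_fromRows_conjTranspose, fromRows_mul, mul_fromCols,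
    fromCols_fromRows_eq_fromBlocks] using hW.conjTranspose_mul_mul_same (fromCols A C)

theorem posSemidef_sub_conjTranspose_mul_mul_of_fromBlocks [Fintype m] [Finite n]
    {S : Matrix n n R} {M : Matrix m n R} {T G : Matrix m m R}
    (hblock : (fromBlocks S Mᴴ M T).PosSemidef) (hG : T * G * M = M) :
    (S - Mᴴ * G * M).PosSemidef := by
  classical
  have := Fintype.ofFinite n
  let V : Matrix (n ⊕ m) n R := fromRows 1 (-(G * M))
  have hmul : fromBlocks S Mᴴ M T * V = fromRows (S - Mᴴ * G * M) 0 := by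
    simp only [V, fromBlocks_mul_fromRows, Matrix.mul_one, Matrix.mul_neg, ← Matrix.mul_assoc, hG,
      ← sub_eq_add_neg, sub_self]
  have hcongr : Vᴴ * fromBlocks S Mᴴ M T * V = S - Mᴴ * G * M := by
    rw [Matrix.mul_assoc, hmul, conjTranspose_fromRows_eq_fromCols_conjTranspose,
      fromCols_mul_fromRows, conjTranspose_one, Matrix.one_mul, Matrix.mul_zero, add_zero]
  exact hcongr ▸ hblock.conjTranspose_mul_mul_same V

end Ring

section CommRing

variable {m n p R : Type*} [CommRing R] [PartialOrder R] [StarRing R] [StarOrderedRing R]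

theorem posSemidef_sum_smul {ι : Type*} {s : Finset ι} {w : ι → R} {X : ι → Matrix n n R}
    (hw : ∀ j ∈ s, 0 ≤ w j) (hX : ∀ j ∈ s, (X j).PosSemidef) :
    (∑ j ∈ s, w j • X j).PosSemidef :=
  posSemidef_sum s fun j hj => (hX j hj).smul (hw j hj)

theorem posSemidef_fromBlocks_riccati [Finite m] [Finite n] [Fintype p]
    {A B : Matrix p n R} {C D : Matrix p m R} {c : R}
    {W : Matrix p p R} {Q : Matrix n n R} {N : Matrix m n R} {T : Matrix m m R}
    (hc : 0 ≤ c) (hW : W.PosSemidef) (hcost : (fromBlocks Q Nᴴ N T).PosSemidef) :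
    (fromBlocks (Aᴴ * W * A + c • (Bᴴ * W * B) + Q) (Cᴴ * W * A + c • (Dᴴ * W * B) + N)ᴴ
      (Cᴴ * W * A + c • (Dᴴ * W * B) + N) (Cᴴ * W * C + c • (Dᴴ * W * D) + T)).PosSemidef := by
  have hadjoint : (Cᴴ * W * A + c • (Dᴴ * W * B) + N)ᴴ =
      Aᴴ * W * C + c • (Bᴴ * W * D) + Nᴴ := by
    simp only [conjTranspose_add, conjTranspose_smul, conjTranspose_mul,
      conjTranspose_conjTranspose, hW.isHermitian.eq, (IsSelfAdjoint.of_nonneg hc).star_eq,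
      Matrix.mul_assoc]
  have hdrift := posSemidef_fromBlocks_conjTranspose_mul_mul hW A C
  have hnoise := (posSemidef_fromBlocks_conjTranspose_mul_mul hW B D).smul hc
  simpa only [hadjoint, fromBlocks_smul, fromBlocks_add] using (hdrift.add hnoise).add hcost

theorem transformed_riccati_step_psd_general [Fintype m] [Finite n] [Fintype p]
    {A B : Matrix p n R} {C D : Matrix p m R} {c : R}
    {W : Matrix p p R} {Q : Matrix n n R} {N M : Matrix m n R} {T Υ G : Matrix m m R}
    (hc : 0 ≤ c) (hW : W.PosSemidef) (hcost : (fromBlocks Q Nᴴ N T).PosSemidef)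
    (hΥ : Υ = Cᴴ * W * C + c • (Dᴴ * W * D) + T)
    (hM : M = Cᴴ * W * A + c • (Dᴴ * W * B) + N) (hG : Υ * G * M = M) :
    (Aᴴ * W * A + c • (Bᴴ * W * B) + Q - Mᴴ * G * M).PosSemidef := by
  subst hΥ hM
  exact posSemidef_sub_conjTranspose_mul_mul_of_fromBlocks
    (posSemidef_fromBlocks_riccati hc hW hcost) hG

end CommRing

/-- One step of the transformed Riccati recursion preserves positive semidefiniteness. -/
theorem transformed_riccati_step_psd (n m L : ℕ)
    (A B : Fin L → Matrix (Fin n) (Fin n) ℝ)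
    (C D : Fin L → Matrix (Fin n) (Fin m) ℝ)
    (σ : ℝ) (ρ : Fin L → Fin L → ℝ)
    (hρ0 : ∀ i j, 0 ≤ ρ i j) (hρ1 : ∀ i, ∑ j, ρ i j = 1)
    (i : Fin L)
    (X : Fin L → Matrix (Fin n) (Fin n) ℝ) (hXsymm : ∀ j, (X j)ᵀ = X j)
    (hXpsd : ∀ j, ∀ v : Fin n → ℝ, 0 ≤ v ⬝ᵥ (X j *ᵥ v))
    (W : Matrix (Fin n) (Fin n) ℝ) (hW : W = ∑ j, ρ i j • X j)
    (Qt : Matrix (Fin n) (Fin n) ℝ) (Lt : Matrix (Fin m) (Fin n) ℝ)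
    (Rt : Matrix (Fin m) (Fin m) ℝ) (hQt : Qtᵀ = Qt) (hRt : Rtᵀ = Rt)
    (hblock : ∀ z : Fin n ⊕ Fin m → ℝ, 0 ≤ z ⬝ᵥ (Matrix.fromBlocks Qt Ltᵀ Lt Rt *ᵥ z))
    (Υt : Matrix (Fin m) (Fin m) ℝ)
    (hΥt : Υt = (C i)ᵀ * W * C i + σ ^ 2 • ((D i)ᵀ * W * D i) + Rt)
    (Mt : Matrix (Fin m) (Fin n) ℝ)
    (hMt : Mt = (C i)ᵀ * W * A i + σ ^ 2 • ((D i)ᵀ * W * B i) + Lt)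
    (Υd : Matrix (Fin m) (Fin m) ℝ)
    (hd1 : Υt * Υd * Υt = Υt) (hd2 : Υd * Υt * Υd = Υd)
    (hd3 : (Υt * Υd)ᵀ = Υt * Υd) (hd4 : (Υd * Υt)ᵀ = Υd * Υt)
    (hreg : Υt * Υd * Mt = Mt) :
    ∀ x : Fin n → ℝ,
      0 ≤ x ⬝ᵥ (((A i)ᵀ * W * A i + σ ^ 2 • ((B i)ᵀ * W * B i) + Qt
          - Mtᵀ * Υd * Mt) *ᵥ x) := by
  have hWpsd : W.PosSemidef := hW ▸ posSemidef_sum_smul (fun j _ => hρ0 i j) fun j _ =>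
    posSemidef_iff_transpose_eq_and_dotProduct_mulVec_nonneg.2 ⟨hXsymm j, hXpsd j⟩
  have hcost : (fromBlocks Qt Ltᴴ Lt Rt).PosSemidef :=
    posSemidef_iff_transpose_eq_and_dotProduct_mulVec_nonneg.2
      ⟨IsSymm.fromBlocks hQt rfl hRt, hblock⟩
  exact (posSemidef_iff_transpose_eq_and_dotProduct_mulVec_nonneg.1
    (transformed_riccati_step_psd_general (sq_nonneg σ) hWpsd hcost hΥt hMt hreg)).2
end

section
/- (The regularity condition of the transformed Riccati recursion holds automatically under the kernel restriction) Let A, B ∈ ℝ^{n×n}, C, D ∈ ℝ^{n×m}, σ ∈ ℝ, let W ∈ ℝ^{n×n} be symmetric positive semidefinite, let W̃ ∈ ℝ^{n×n} be symmetric, and let R̃ ∈ ℝ^{m×m} be symmetric positive semidefinite with Ker(R̃) ⊆ Ker(C) ∩ Ker(D). Set L̃ = Cᵀ W̃ A + σ² Dᵀ W̃ B, Υ̃ = Cᵀ W C + σ² Dᵀ W D + R̃, and M̃ = Cᵀ W A + σ² Dᵀ W B + L̃, and let Υ̃† be the Moore–Penrose pseudoinverse of Υ̃. Then Υ̃ Υ̃†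 M̃ = M̃. -/
open Matrix

/-!
Since `Υ̃ Υ̃†` fixes the columns of `Υ̃`, it fixes every matrix whose left kernel contains that of
`Υ̃`. If `wᴴ Υ̃ = 0`, then the real parts of the quadratic forms of the summands of `Υ̃` at `w` are
nonnegative and add up to zero, so that of `R̃` vanishes; semidefiniteness gives `R̃ w = 0`, hence
`C w = D w = 0` and `wᴴ M̃ = 0`.
-/

section LeftKernel

variable {m k p α : Type*} [Fintype m] [Fintype k] [Ring α]

theorem mul_mul_eq_of_vecMul_eq_zero_imp {Υ : Matrix m k α} {G : Matrix k m α}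
    {X : Matrix m p α} (hG : Υ * G * Υ = Υ) (hX : ∀ w : m → α, w ᵥ* Υ = 0 → w ᵥ* X = 0) :
    Υ * G * X = X := by
  classical
  have hΥ : (1 - Υ * G) * Υ = 0 := by rw [Matrix.sub_mul, Matrix.one_mul, hG, sub_self]
  have hrow : (1 - Υ * G) * X = 0 := by
    refine funext fun i ↦ ?_
    rw [mul_apply_eq_vecMul]
    exact hX _ (by rw [← mul_apply_eq_vecMul, hΥ]; rfl)
  rw [Matrix.sub_mul, Matrix.one_mul, sub_eq_zero] at hrow
  exact hrow.symm

end LeftKernel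

section Accretive

variable {𝕜 n m : Type*} [RCLike 𝕜] [Fintype n] [Fintype m]

/-- A square matrix is accretive if its quadratic form has nonnegative real part. Unlike
`Matrix.PosSemidef`, this does not ask the matrix to be Hermitian; a Hermitian matrix is accretive
exactly when it is positive semidefinite. -/
def IsAccretive (W : Matrix n n 𝕜) : Prop :=
  ∀ x : n → 𝕜, 0 ≤ RCLike.re (star x ⬝ᵥ (W *ᵥ x))

namespace IsAccretive

theorem add {V W : Matrix n n 𝕜} (hV : IsAccretive V) (hW : IsAccretive W) :
    IsAccretive (V + W) := fun x ↦ by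
  rw [add_mulVec, dotProduct_add, map_add]
  exact add_nonneg (hV x) (hW x)

theorem smul {W : Matrix n n 𝕜} (hW : IsAccretive W) {c : ℝ} (hc : 0 ≤ c) :
    IsAccretive (c • W) := fun x ↦ by
  rw [smul_mulVec, dotProduct_smul, RCLike.smul_re]
  exact mul_nonneg hc (hW x)

theorem conjTranspose_mul_mul_same {W : Matrix n n 𝕜} (hW : IsAccretive W)
    (E : Matrix n m 𝕜) : IsAccretive (Eᴴ * W * E) := fun x ↦ by
  rw [← mulVec_mulVec, ← mulVec_mulVec, dotProduct_mulVec, ← star_mulVec]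
  exact hW (E *ᵥ x)

open scoped ComplexOrder in
theorem posSemidef {R : Matrix n n 𝕜} (hR : IsAccretive R) (hRH : R.IsHermitian) :
    R.PosSemidef :=
  .of_dotProduct_mulVec_nonneg hRH fun x ↦
    RCLike.nonneg_iff.2 ⟨hR x, hRH.im_star_dotProduct_mulVec_self x⟩

open scoped ComplexOrder in
theorem mulVec_eq_zero_of_star_vecMul_add_eq_zero {S R : Matrix n n 𝕜} (hS : IsAccretive S)
    (hR : IsAccretive R) (hRH : R.IsHermitian) {w : n → 𝕜} (hw : star w ᵥ* (S + R) = 0) :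
    R *ᵥ w = 0 := by
  have hsum : RCLike.re (star w ⬝ᵥ (S *ᵥ w)) + RCLike.re (star w ⬝ᵥ (R *ᵥ w)) = 0 := by
    rw [← map_add, ← dotProduct_add, ← add_mulVec, dotProduct_mulVec, hw, zero_dotProduct,
      map_zero]
  have hre : RCLike.re (star w ⬝ᵥ (R *ᵥ w)) = 0 := by linarith [hS w, hR w]
  exact ((hR.posSemidef hRH).dotProduct_mulVec_zero_iff w).1
    (RCLike.ext (by simpa using hre) (by simpa using hRH.im_star_dotProduct_mulVec_self w))

end IsAccretive

end Accretive

theorem transformed_riccati_regularity_general {𝕜 n m p : Type*} [RCLike 𝕜] [Fintype n]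
    [Fintype m] (A B : Matrix n p 𝕜) (C D : Matrix n m 𝕜) (σ : ℝ)
    {W : Matrix n n 𝕜} (hW : IsAccretive W) (Wt : Matrix n n 𝕜)
    {Rt : Matrix m m 𝕜} (hRt : IsAccretive Rt) (hRtH : Rt.IsHermitian)
    (hkerR : ∀ v : m → 𝕜, Rt *ᵥ v = 0 → C *ᵥ v = 0 ∧ D *ᵥ v = 0)
    {Lt : Matrix m p 𝕜} (hLt : Lt = Cᴴ * Wt * A + σ ^ 2 • (Dᴴ * Wt * B))
    {Υt : Matrix m m 𝕜} (hΥt : Υt = Cᴴ * W * C + σ ^ 2 • (Dᴴ * W * D) + Rt)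
    {Mt : Matrix m p 𝕜} (hMt : Mt = Cᴴ * W * A + σ ^ 2 • (Dᴴ * W * B) + Lt)
    {G : Matrix m m 𝕜} (hG : Υt * G * Υt = Υt) :
    Υt * G * Mt = Mt := by
  refine mul_mul_eq_of_vecMul_eq_zero_imp hG fun w hw ↦ ?_
  have hS : IsAccretive (Cᴴ * W * C + σ ^ 2 • (Dᴴ * W * D)) :=
    (hW.conjTranspose_mul_mul_same C).add ((hW.conjTranspose_mul_mul_same D).smul (sq_nonneg σ))
  have hRw : Rt *ᵥ star w = 0 :=
    hS.mulVec_eq_zero_of_star_vecMul_add_eq_zero hRt hRtH (by rwa [star_star, ← hΥt])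
  obtain ⟨hCw, hDw⟩ := hkerR _ hRw
  have hwC : w ᵥ* Cᴴ = 0 := by rw [vecMul_conjTranspose, hCw, star_zero]
  have hwD : w ᵥ* Dᴴ = 0 := by rw [vecMul_conjTranspose, hDw, star_zero]
  simp only [hMt, hLt, vecMul_add, vecMul_smul, ← vecMul_vecMul, hwC, hwD, zero_vecMul,
    smul_zero, add_zero]

/-- The regularity condition of the transformed Riccati recursion holds
automatically under the kernel restriction `Ker(R̃) ⊆ Ker(C) ∩ Ker(D)`. -/
theorem transformed_riccati_regularity (n m : ℕ)
    (A B : Matrix (Fin n) (Fin n) ℝ)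
    (C D : Matrix (Fin n) (Fin m) ℝ) (σ : ℝ)
    (W : Matrix (Fin n) (Fin n) ℝ) (hW : Wᵀ = W)
    (hWpsd : ∀ x : Fin n → ℝ, 0 ≤ x ⬝ᵥ (W *ᵥ x))
    (Wt : Matrix (Fin n) (Fin n) ℝ) (hWt : Wtᵀ = Wt)
    (Rt : Matrix (Fin m) (Fin m) ℝ) (hRt : Rtᵀ = Rt)
    (hRtpsd : ∀ v : Fin m → ℝ, 0 ≤ v ⬝ᵥ (Rt *ᵥ v))
    (hkerR : ∀ v : Fin m → ℝ, Rt *ᵥ v = 0 → C *ᵥ v = 0 ∧ D *ᵥ v = 0)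
    (Lt : Matrix (Fin m) (Fin n) ℝ) (hLt : Lt = Cᵀ * Wt * A + σ ^ 2 • (Dᵀ * Wt * B))
    (Υt : Matrix (Fin m) (Fin m) ℝ)
    (hΥt : Υt = Cᵀ * W * C + σ ^ 2 • (Dᵀ * W * D) + Rt)
    (Mt : Matrix (Fin m) (Fin n) ℝ)
    (hMt : Mt = Cᵀ * W * A + σ ^ 2 • (Dᵀ * W * B) + Lt)
    (Υd : Matrix (Fin m) (Fin m) ℝ)
    (hd1 : Υt * Υd * Υt = Υt) (hd2 : Υd * Υt * Υd = Υd)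
    (hd3 : (Υt * Υd)ᵀ = Υt * Υd) (hd4 : (Υd * Υt)ᵀ = Υd * Υt) :
    Υt * Υd * Mt = Mt := by
  exact transformed_riccati_regularity_general A B C D σ (fun x ↦ by simpa using hWpsd x) Wt
    (fun v ↦ by simpa using hRtpsd v) hRt hkerR hLt hΥt hMt hd1
end
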